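/- arXiv:math/0702277 — 2 statements merged into one kernel-verified Lean document; each statement's English description precedes it below -/
import Mathlib

section
/- Let N ≥ 2 and let η^1 ≥ η^2 ≥ … ≥ η^{N−1} ≥ 1 be positive integers. Then (1/η^{N−1}!) · ∏_{a=1}^{N−2} (1/(η^a − η^{a+1})!) · S̄ym^η_s( Y_η(s) ) = ∏_{a=1}^{N−2} G_{η^{a+1}, η^a}( s^{a+1}_1,…,s^{a+1}_{η^{a+1}} ; s^a_1,…,s^a_{η^a} ). -/
open scoped Classical

/-- `W_k(t_1,…,t_k) = ∏_{1≤i<j≤k} (t_i − t_j − 1)/(t_i − t_j)` (0-based indexing,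
variables `t 0, …, t (k-1)`). -/
noncomputable def Wg (k : ℕ) (t : ℕ → ℂ) : ℂ :=
  ∏ i ∈ Finset.range k, ∏ j ∈ Finset.Ioo i k, (t i - t j - 1) / (t i - t j)

/-- The action of a tuple of permutations `σ = (σ_1, …, σ_{N−1})`,
`σ_a ∈ S_{η^a}`, on the collection of variables `s^a_i`. -/
noncomputable def sPerm (N : ℕ) (η : ℕ → ℕ) (s : ℕ → ℕ → ℂ)
    (σ : (a : Fin (N - 1)) → Equiv.Perm (Fin (η a))) : ℕ → ℕ → ℂ :=
  fun a i =>
    if h : a < N - 1 ∧ i < η a then s a ((σ ⟨a, h.1⟩ ⟨i, h.2⟩ : Fin (η a)) : ℕ)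
    else s a i

/-- `Y_η(s)` (0-based: groups `a = 1, …, N−2`). -/
noncomputable def Yfun (N : ℕ) (η : ℕ → ℕ) (s : ℕ → ℕ → ℂ) : ℂ :=
  ∏ a ∈ Finset.Ico 1 (N - 1), ∏ j ∈ Finset.range (η a),
    ((s a j - s (a - 1) (j + (η (a - 1) - η a)))⁻¹ *
      ∏ i ∈ Finset.range j,
        ((s a i - s (a - 1) (j + (η (a - 1) - η a)) + 1) /
          (s a i - s (a - 1) (j + (η (a - 1) - η a)))))

/-- The tuple `z` permuted by `σ ∈ S_r` (acting on the indices `0, …, r−1`). -/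
noncomputable def permOne (r : ℕ) (z : ℕ → ℂ) (σ : Equiv.Perm (Fin r)) : ℕ → ℂ :=
  fun m => if h : m < r then z ((σ ⟨m, h⟩ : Fin r) : ℕ) else z m

/-- `G_{p,r}(y_1,…,y_p; z_1,…,z_r) = (1/(r−p)!) · S̄ym_{z}[ ∏_{i=1}^p
( (1/(y_i − z_{i+r−p})) · ∏_{i<j≤p} (y_i − z_{j+r−p} + 1)/(y_i − z_{j+r−p}) ) ]`,
with 0-based indexing of the variables. -/
noncomputable def G (p r : ℕ) (y z : ℕ → ℂ) : ℂ :=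
  (1 / (Nat.factorial (r - p) : ℂ)) *
    ∑ σ : Equiv.Perm (Fin r),
      (∏ i ∈ Finset.range p, ((y i - permOne r z σ (i + (r - p)))⁻¹ *
        ∏ j ∈ Finset.Ioo i p, ((y i - permOne r z σ (j + (r - p)) + 1) /
          (y i - permOne r z σ (j + (r - p)))))) * Wg r (permOne r z σ)

open Equiv Finset

/-!
The `a`-th factor of `Y_η` involves the variables of two consecutive groups only, so the sum over
tuples of permutations can be carried out one group at a time, starting with the first. The sum over
the first group is, up to a factorial, `G` evaluated at a permutation of the second group. Since `G`
is symmetric in its `y`-variables, it is a constant for the remaining sum. The last group of `k`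
variables contributes `∑ W = k!`, by induction on `k` and Lagrange interpolation.

For the symmetry of `G` under the exchange of neighbours `y_a`, `y_b`, let `z_a`, `z_b` be the
variables at the corresponding positions of `z`. The difference of the two staircase products is
`z_a - z_b + h` times a function invariant under the exchange of `z_a` and `z_b`, and
`(z_a - z_b + h) W(z)` changes sign under this exchange. Hence the terms of `σ` and of `σ` times a
transposition cancel in the symmetrized difference.
-/

theorem sum_prod_sub_sub_div_sub {K ι : Type*} [Field K] [DecidableEq ι] {s : Finset ι}
    {t : ι → K} (ht : Set.InjOn t s) (h : K) :
    ∑ m ∈ s, ∏ j ∈ s.erase m, (t m - t j - h) / (t m - t j) = #s := by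
  rcases s.eq_empty_or_nonempty with rfl | hs
  · simp
  rcases eq_or_ne h 0 with rfl | hh
  · have hone : ∀ m ∈ s, ∏ j ∈ s.erase m, (t m - t j - 0) / (t m - t j) = 1 := fun m hm =>
      prod_eq_one fun j hj => by
        rw [sub_zero, div_self (sub_ne_zero.2 fun e => ne_of_mem_erase hj
          (ht (mem_of_mem_erase hj) hm e.symm))]
    rw [sum_congr rfl hone, sum_const, nsmul_one]
  -- Compare the coefficient of `X ^ (#s - 1)` in `p - q` with its Lagrange interpolation formula.
  let p := Lagrange.nodal s fun j => t j + h
  let q := Lagrange.nodal s t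
  have hdeg : (p - q).degree < #s := by
    rw [← Lagrange.degree_nodal (s := s) (v := fun j => t j + h)]
    exact Polynomial.degree_sub_lt_left (by simp only [p, q, Lagrange.degree_nodal])
      Lagrange.nodal_monic.ne_zero
      (by rw [Lagrange.nodal_monic.leadingCoeff, Lagrange.nodal_monic.leadingCoeff])
  have hcoeff : (p - q).coeff (#s - 1) = -(#s * h) := by
    simp only [p, q, Lagrange.nodal, Polynomial.coeff_sub,
      Polynomial.prod_X_sub_C_coeff_card_pred _ _ hs.card_pos, sum_add_distrib, sum_const,
      nsmul_eq_mul]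
    ring
  have heval : ∀ m ∈ s, (p - q).eval (t m) = -h * ∏ j ∈ s.erase m, (t m - t j - h) := by
    intro m hm
    rw [Polynomial.eval_sub, Lagrange.eval_nodal_at_node hm, sub_zero, Lagrange.eval_nodal,
      ← mul_prod_erase _ _ hm]
    simp only [sub_add_cancel_left, sub_sub]
  apply mul_left_cancel₀ (neg_ne_zero.2 hh)
  calc -h * ∑ m ∈ s, ∏ j ∈ s.erase m, (t m - t j - h) / (t m - t j)
      = ∑ m ∈ s, (p - q).eval (t m) / ∏ j ∈ s.erase m, (t m - t j) := by
        rw [mul_sum]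
        exact sum_congr rfl fun m hm => by rw [heval m hm, prod_div_distrib, mul_div_assoc]
    _ = -h * #s := by rw [← Lagrange.coeff_eq_sum ht hdeg, hcoeff]; ring

theorem sum_pi_prod_chain {R : Type*} [CommSemiring R] {m : ℕ} {P : Fin (m + 1) → Type*}
    [∀ a, Fintype (P a)] {f : ∀ a : Fin m, P a.succ → P a.castSucc → R} {c : Fin m → R}
    (hf : ∀ a y, ∑ x, f a y x = c a) (w : P (Fin.last m) → R) :
    ∑ σ : ∀ a, P a, (∏ a, f a (σ a.succ) (σ a.castSucc)) * w (σ (Fin.last m)) =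
      (∏ a, c a) * ∑ x, w x := by
  induction m with
  | zero =>
    rw [← (Fin.consEquiv P).sum_comp, Fintype.sum_prod_type]
    simp [Fin.consEquiv]
  | succ m ih =>
    have htail := ih (P := fun a => P a.succ) (fun a => hf a.succ) w
    rw [← (Fin.consEquiv P).sum_comp, Fintype.sum_prod_type_right, Fin.prod_univ_succ, mul_assoc]
    refine Eq.trans (sum_congr rfl fun σ _ => ?_) ((mul_sum _ _ _).symm.trans
      (congrArg (c 0 * ·) htail))
    rw [← hf 0 (σ 0), sum_mul]
    exact sum_congr rfl fun x _ => by rw [Fin.prod_univ_succ, mul_assoc]; rfl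

theorem prod_swap_zero_succ {M : Type*} [CommMonoid M] {n : ℕ} (p : Fin (n + 1))
    (f : Fin (n + 1) → M) :
    ∏ j : Fin n, f (swap 0 p j.succ) = ∏ j ∈ univ.erase p, f j := by
  refine prod_bij (fun j _ => swap 0 p j.succ) (fun j _ => ?_)
    (fun i _ j _ hij => Fin.succ_injective n ((swap 0 p).injective hij)) (fun j hj => ?_)
    fun _ _ => rfl
  · simp [swap_apply_eq_iff]
  · obtain ⟨i, hi⟩ := Fin.exists_succ_eq.2
      (show swap 0 p j ≠ 0 by simpa [swap_apply_eq_iff] using hj)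
    exact ⟨i, mem_univ i, by rw [hi, swap_apply_self]⟩

section OrderedPairs

variable {ι M : Type*} [LinearOrder ι] [Fintype ι] [CommMonoid M]

/-- The pairs `(i, j)` with `i < j`, over which the products `∏_{i<j}` run. -/
def ltPairs (ι : Type*) [LinearOrder ι] [Fintype ι] : Finset (ι × ι) :=
  univ.filter fun x => x.1 < x.2

theorem mem_ltPairs {x : ι × ι} : x ∈ ltPairs ι ↔ x.1 < x.2 := by simp [ltPairs]

theorem prod_ltPairs [LocallyFiniteOrderTop ι] (f : ι × ι → M) :
    ∏ x ∈ ltPairs ι, f x = ∏ i, ∏ j ∈ Ioi i, f (i, j) :=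
  prod_finset_product _ _ _ fun x => by simp [mem_ltPairs]

theorem prod_ltPairs_fin (n : ℕ) (f : ℕ → ℕ → M) :
    ∏ x ∈ ltPairs (Fin n), f x.1 x.2 = ∏ i ∈ range n, ∏ j ∈ Ioo i n, f i j := by
  rw [prod_ltPairs, prod_range]
  exact prod_congr rfl fun i _ => by rw [← Fin.map_valEmbedding_Ioi, prod_map]; rfl

theorem prod_ltPairs_fin_right (n : ℕ) (f : ℕ → ℕ → M) :
    ∏ x ∈ ltPairs (Fin n), f x.1 x.2 = ∏ j ∈ range n, ∏ i ∈ range j, f i j := by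
  rw [prod_finset_product_right _ univ Iio fun x => by simp [mem_ltPairs], prod_range]
  exact prod_congr rfl fun j _ => by
    rw [← Nat.Iio_eq_range, ← Fin.map_valEmbedding_Iio, prod_map]; rfl

theorem prod_ltPairs_fin_succ (n : ℕ) (f : Fin (n + 1) × Fin (n + 1) → M) :
    ∏ x ∈ ltPairs (Fin (n + 1)), f x =
      (∏ j : Fin n, f (0, j.succ)) * ∏ x ∈ ltPairs (Fin n), f (x.1.succ, x.2.succ) := by
  rw [prod_ltPairs, prod_ltPairs, Fin.prod_univ_succ, Fin.prod_Ioi_zero]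
  simp only [Fin.prod_Ioi_succ]

variable {a b : ι}

theorem prod_ltPairs_erase_swap_left (hab : a ⋖ b) (f : ι × ι → M) :
    ∏ x ∈ (ltPairs ι).erase (a, b), f (swap a b x.1, x.2) =
      ∏ x ∈ (ltPairs ι).erase (a, b), f x := by
  refine prod_equiv ((swap a b).prodCongr (Equiv.refl ι)) (fun ⟨i, j⟩ => ?_) fun _ _ => rfl
  have := hab.lt
  have := @hab.2 j
  simp only [prodCongr_apply, Prod.map, coe_refl, id, mem_erase, mem_ltPairs, swap_apply_def,
    ne_eq, Prod.mk.injEq]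
  grind

theorem prod_ltPairs_erase_swap_right (hab : a ⋖ b) (f : ι × ι → M) :
    ∏ x ∈ (ltPairs ι).erase (a, b), f (x.1, swap a b x.2) =
      ∏ x ∈ (ltPairs ι).erase (a, b), f x := by
  refine prod_equiv ((Equiv.refl ι).prodCongr (swap a b)) (fun ⟨i, j⟩ => ?_) fun _ _ => rfl
  have := hab.lt
  have := @hab.2 i
  simp only [prodCongr_apply, Prod.map, coe_refl, id, mem_erase, mem_ltPairs, swap_apply_def,
    ne_eq, Prod.mk.injEq]
  grind

end OrderedPairs

section Weight

variable {ι K : Type*} [LinearOrder ι] [Fintype ι] [Field K]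

/-- The weight `W(t) = ∏_{i<j} (t_i - t_j - h) / (t_i - t_j)` of the symmetrization, with the shift
`1` of the paper replaced by an arbitrary scalar `h`. -/
def weight (h : K) (t : ι → K) : K :=
  ∏ x ∈ ltPairs ι, (t x.1 - t x.2 - h) / (t x.1 - t x.2)

theorem weight_succ {n : ℕ} (h : K) (t : Fin (n + 1) → K) :
    weight h t = (∏ j : Fin n, (t 0 - t j.succ - h) / (t 0 - t j.succ)) * weight h (t ∘ Fin.succ) :=
  prod_ltPairs_fin_succ n _

theorem weight_comp_decomposeFin {n : ℕ} (h : K) (t : Fin (n + 1) → K) (p : Fin (n + 1))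
    (e : Perm (Fin n)) :
    weight h (t ∘ Perm.decomposeFin.symm (p, e)) =
      (∏ j ∈ univ.erase p, (t p - t j - h) / (t p - t j)) *
        weight h ((t ∘ swap 0 p ∘ Fin.succ) ∘ e) := by
  rw [weight_succ, ← prod_swap_zero_succ p fun j => (t p - t j - h) / (t p - t j),
    ← Equiv.prod_comp e fun j => (t p - t (swap 0 p j.succ) - h) / (t p - t (swap 0 p j.succ))]
  simp only [Function.comp_def, Perm.decomposeFin_symm_apply_zero,
    Perm.decomposeFin_symm_apply_succ]

theorem sum_weight_comp_perm {n : ℕ} (h : K) {t : Fin n → K} (ht : Function.Injective t) :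
    ∑ σ : Perm (Fin n), weight h (t ∘ σ) = n.factorial := by
  induction n with
  | zero => simp [weight, ltPairs]
  | succ n ih =>
    have hrest (p : Fin (n + 1)) : Function.Injective (t ∘ swap 0 p ∘ Fin.succ) :=
      ht.comp ((swap 0 p).injective.comp (Fin.succ_injective n))
    rw [← Perm.decomposeFin.symm.sum_comp, Fintype.sum_prod_type]
    simp only [weight_comp_decomposeFin, ← mul_sum, ih (hrest _), ← sum_mul]
    rw [sum_prod_sub_sub_div_sub ht.injOn, card_univ, Fintype.card_fin, Nat.factorial_succ,
      Nat.cast_mul]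

end Weight

section Staircase

variable {ι κ K : Type*} [LinearOrder ι] [Fintype ι] [LinearOrder κ] [Fintype κ] [Field K]

/-- The summand `∏_i (y_i - u_i)⁻¹ · ∏_{i<j} (y_i - u_j + h) / (y_i - u_j)` of `G`, where `u`
consists of the last variables of `z`; the factors of `Y_η` are of this form as well. -/
def staircase (h : K) (y u : ι → K) : K :=
  (∏ i, (y i - u i)⁻¹) * ∏ x ∈ ltPairs ι, (y x.1 - u x.2 + h) / (y x.1 - u x.2)

/-- The factors of `staircase h y u` other than the three that involve only the positions `a < b`,
namely `(a, a)`, `(b, b)` and `(a, b)`. -/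
def staircaseRest (h : K) (a b : ι) (y u : ι → K) : K :=
  (∏ i ∈ (univ.erase a).erase b, (y i - u i)⁻¹) *
    ∏ x ∈ (ltPairs ι).erase (a, b), (y x.1 - u x.2 + h) / (y x.1 - u x.2)

variable {a b : ι} {h : K} {y u : ι → K}

theorem staircase_eq_mul_rest (hab : a < b) :
    staircase h y u = (y a - u a)⁻¹ * (y b - u b)⁻¹ * ((y a - u b + h) / (y a - u b)) *
      staircaseRest h a b y u := by
  rw [staircase, staircaseRest, ← mul_prod_erase univ _ (mem_univ a),
    ← mul_prod_erase (univ.erase a) _ (mem_erase.2 ⟨hab.ne', mem_univ b⟩),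
    ← mul_prod_erase _ _ (mem_ltPairs.2 hab : (a, b) ∈ ltPairs ι)]
  ring

theorem staircaseRest_comp_swap_left (hab : a ⋖ b) :
    staircaseRest h a b (y ∘ swap a b) u = staircaseRest h a b y u := by
  refine congrArg₂ (· * ·) (prod_congr rfl fun i hi => ?_)
    (prod_ltPairs_erase_swap_left hab fun x => (y x.1 - u x.2 + h) / (y x.1 - u x.2))
  rw [Function.comp_apply, swap_apply_of_ne_of_ne (ne_of_mem_erase (mem_of_mem_erase hi))
    (ne_of_mem_erase hi)]

theorem staircaseRest_comp_swap_right (hab : a ⋖ b) :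
    staircaseRest h a b y (u ∘ swap a b) = staircaseRest h a b y u := by
  refine congrArg₂ (· * ·) (prod_congr rfl fun i hi => ?_)
    (prod_ltPairs_erase_swap_right hab fun x => (y x.1 - u x.2 + h) / (y x.1 - u x.2))
  rw [Function.comp_apply, swap_apply_of_ne_of_ne (ne_of_mem_erase (mem_of_mem_erase hi))
    (ne_of_mem_erase hi)]

theorem staircase_comp_swap_sub (hab : a ⋖ b) (hyu : ∀ i j, y i ≠ u j) :
    staircase h (y ∘ swap a b) u - staircase h y u =
      (y a - y b) * (u a - u b + h) /
        ((y a - u a) * (y a - u b) * ((y b - u a) * (y b - u b))) * staircaseRest h a b y u := by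
  have haa := sub_ne_zero.2 (hyu a a)
  have hab' := sub_ne_zero.2 (hyu a b)
  have hba := sub_ne_zero.2 (hyu b a)
  have hbb := sub_ne_zero.2 (hyu b b)
  rw [staircase_eq_mul_rest hab.lt, staircase_eq_mul_rest hab.lt, staircaseRest_comp_swap_left hab,
    ← sub_mul]
  simp only [Function.comp_apply, swap_apply_left, swap_apply_right]
  field_simp
  ring

theorem weight_comp_swap_mul (hab : a ⋖ b) (h : K) (t : ι → K) :
    (t a - t b + h) * weight h t = - ((t b - t a + h) * weight h (t ∘ swap a b)) := by
  have hmem : (a, b) ∈ ltPairs ι := mem_ltPairs.2 hab.lt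
  have hrest : ∏ x ∈ (ltPairs ι).erase (a, b),
      ((t ∘ swap a b) x.1 - (t ∘ swap a b) x.2 - h) / ((t ∘ swap a b) x.1 - (t ∘ swap a b) x.2) =
      ∏ x ∈ (ltPairs ι).erase (a, b), (t x.1 - t x.2 - h) / (t x.1 - t x.2) :=
    (prod_ltPairs_erase_swap_left hab
      fun x => (t x.1 - t (swap a b x.2) - h) / (t x.1 - t (swap a b x.2))).trans
      (prod_ltPairs_erase_swap_right hab fun x => (t x.1 - t x.2 - h) / (t x.1 - t x.2))
  rw [weight, weight, ← mul_prod_erase _ _ hmem, ← mul_prod_erase _ _ hmem, hrest]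
  simp only [Function.comp_apply, swap_apply_left, swap_apply_right]
  rw [← neg_sub (t a) (t b), div_neg]
  ring

theorem staircase_comp_swap_sub_mul_weight {e : ι ↪ κ} (hab : a ⋖ b) (he : e a ⋖ e b) {z : κ → K}
    (hyz : ∀ i j, y i ≠ z j) :
    (staircase h (y ∘ swap a b) (z ∘ e) - staircase h y (z ∘ e)) * weight h z =
      -((staircase h (y ∘ swap a b) ((z ∘ swap (e a) (e b)) ∘ e) -
        staircase h y ((z ∘ swap (e a) (e b)) ∘ e)) * weight h (z ∘ swap (e a) (e b))) := by
  have hze : (z ∘ swap (e a) (e b)) ∘ e = (z ∘ e) ∘ swap a b := by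
    rw [Function.comp_assoc, e.swap_comp, Function.comp_assoc]
  rw [hze, staircase_comp_swap_sub hab (u := z ∘ e) fun i j => hyz i (e j),
    staircase_comp_swap_sub hab (u := (z ∘ e) ∘ swap a b) fun i j => hyz i (e (swap a b j)),
    staircaseRest_comp_swap_right hab]
  simp only [Function.comp_apply, swap_apply_left, swap_apply_right]
  linear_combination (y a - y b) /
    ((y a - z (e a)) * (y a - z (e b)) * ((y b - z (e a)) * (y b - z (e b)))) *
      staircaseRest h a b y (z ∘ e) * weight_comp_swap_mul he h z

/-- The weighted symmetrization in `z` of the staircase in `y` and the subtuple `z ∘ e`;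
for `h = 1` and the last `p` of `r` positions this is `(r - p)! · G_{p,r}(y; z)`. -/
def symStaircase (h : K) (e : ι ↪ κ) (y : ι → K) (z : κ → K) : K :=
  ∑ σ : Perm κ, staircase h y ((z ∘ σ) ∘ e) * weight h (z ∘ σ)

theorem symStaircase_comp_swap {e : ι ↪ κ} (hab : a ⋖ b) (he : e a ⋖ e b) {z : κ → K}
    (hyz : ∀ i j, y i ≠ z j) :
    symStaircase h e (y ∘ swap a b) z = symStaircase h e y z := by
  rw [← sub_eq_zero, symStaircase, symStaircase, ← sum_sub_distrib]
  simp only [← sub_mul]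
  refine sum_involution (fun σ _ => σ * swap (e a) (e b)) (fun σ _ => ?_)
    (fun σ _ _ hσ => he.ne (mul_swap_eq_iff.1 hσ)) (fun _ _ => mem_univ _)
    fun σ _ => mul_swap_mul_self _ _ σ
  rw [staircase_comp_swap_sub_mul_weight hab he (z := z ∘ σ) fun i j => hyz i (σ j)]
  exact neg_add_cancel _

theorem symStaircase_comp_perm {p : ℕ} {e : Fin p ↪ κ} (he : ∀ i j, i ⋖ j → e i ⋖ e j)
    {y : Fin p → K} {z : κ → K} (hyz : ∀ i j, y i ≠ z j) (τ : Perm (Fin p)) :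
    symStaircase h e (y ∘ τ) z = symStaircase h e y z := by
  cases p with
  | zero => rw [Subsingleton.elim (y ∘ τ) y]
  | succ n =>
    have hτ : τ ∈ Submonoid.closure (Set.range fun i : Fin n => swap i.castSucc i.succ) := by
      rw [Perm.mclosure_swap_castSucc_succ]
      exact Submonoid.mem_top τ
    induction hτ using Submonoid.closure_induction_right with
    | one => rfl
    | mul_right τ _ _ hswap ih =>
      obtain ⟨i, rfl⟩ := hswap
      have hi : i.castSucc ⋖ i.succ := Fin.covBy_iff.2 (Nat.covBy_iff_add_one_eq.2 rfl)
      exact (symStaircase_comp_swap hi (he _ _ hi) fun i j => hyz (τ i) j).trans ih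

end Staircase

section Specialization

/-- The positions `r - p, …, r - 1` of the last `p` among `r` variables. -/
def lastPositions {p r : ℕ} (hpr : p ≤ r) : Fin p ↪ Fin r where
  toFun i := ⟨i + (r - p), by omega⟩
  inj' i j hij := by simpa [Fin.ext_iff] using hij

theorem lastPositions_val {p r : ℕ} (hpr : p ≤ r) (i : Fin p) :
    (lastPositions hpr i : ℕ) = i + (r - p) := rfl

theorem lastPositions_covBy {p r : ℕ} (hpr : p ≤ r) (i j : Fin p) (hij : i ⋖ j) :
    lastPositions hpr i ⋖ lastPositions hpr j := by
  simp only [Fin.covBy_iff, Nat.covBy_iff_add_one_eq, lastPositions_val] at hij ⊢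
  omega

theorem permOne_val {r : ℕ} (z : ℕ → ℂ) (σ : Perm (Fin r)) (i : Fin r) :
    permOne r z σ i = z (σ i) := by
  simp [permOne]

theorem Wg_eq_weight (k : ℕ) (t : ℕ → ℂ) : Wg k t = weight 1 fun i : Fin k => t i :=
  (prod_ltPairs_fin k fun i j => (t i - t j - 1) / (t i - t j)).symm

theorem staircase_one_eq_prod_Ioo (p : ℕ) (y u : ℕ → ℂ) :
    staircase 1 (fun i : Fin p => y i) (fun i => u i) =
      ∏ i ∈ range p, ((y i - u i)⁻¹ * ∏ j ∈ Ioo i p, ((y i - u j + 1) / (y i - u j))) := by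
  rw [prod_mul_distrib, ← prod_ltPairs_fin p fun i j => (y i - u j + 1) / (y i - u j), prod_range,
    staircase]

theorem staircase_one_eq_prod_range (p : ℕ) (y u : ℕ → ℂ) :
    staircase 1 (fun i : Fin p => y i) (fun i => u i) =
      ∏ j ∈ range p, ((y j - u j)⁻¹ * ∏ i ∈ range j, ((y i - u j + 1) / (y i - u j))) := by
  rw [prod_mul_distrib, ← prod_ltPairs_fin_right p fun i j => (y i - u j + 1) / (y i - u j),
    prod_range, staircase]

theorem G_eq_symStaircase {p r : ℕ} (hpr : p ≤ r) (y z : ℕ → ℂ) :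
    G p r y z = (1 / ((r - p).factorial : ℂ)) *
      symStaircase 1 (lastPositions hpr) (fun i => y i) (fun j => z j) := by
  rw [G, symStaircase]
  congr! 2 with σ
  rw [Wg_eq_weight, ← staircase_one_eq_prod_Ioo p y fun i => permOne r z σ (i + (r - p))]
  simp only [permOne_val, ← lastPositions_val hpr, Function.comp_def]

/-- The group of variables `s^a_1, …, s^a_{η^a}`, on which `S_{η^a}` acts by precomposition. -/
def groupVars (η : ℕ → ℕ) (s : ℕ → ℕ → ℂ) (a : ℕ) : Fin (η a) → ℂ :=
  fun i => s a i

variable {m : ℕ} {η : ℕ → ℕ}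

theorem groupVars_sPerm {N : ℕ} (s : ℕ → ℕ → ℂ) (σ : ∀ a : Fin (N - 1), Perm (Fin (η a)))
    (a : Fin (N - 1)) : groupVars η (sPerm N η s σ) a = groupVars η s a ∘ σ a := by
  funext i
  simp [groupVars, sPerm]

theorem Yfun_eq_prod_staircase (hη : ∀ a : Fin m, η (a + 1) ≤ η a) (s : ℕ → ℕ → ℂ) :
    Yfun (m + 2) η s = ∏ a : Fin m,
      staircase 1 (groupVars η s (a + 1)) (groupVars η s a ∘ lastPositions (hη a)) := by
  rw [Yfun, prod_Ico_eq_prod_range, prod_range]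
  refine prod_congr rfl fun a _ => ?_
  simp only [add_comm 1, Nat.add_sub_cancel]
  exact (staircase_one_eq_prod_range _ (s (a + 1)) fun i => s a (i + (η a - η (a + 1)))).symm

theorem Yfun_mul_prod_Wg (hη : ∀ a : Fin m, η (a + 1) ≤ η a) (s : ℕ → ℕ → ℂ) :
    Yfun (m + 2) η s * ∏ a ∈ range (m + 1), Wg (η a) (s a) =
      (∏ a : Fin m,
        staircase 1 (groupVars η s (a + 1)) (groupVars η s a ∘ lastPositions (hη a)) *
          weight 1 (groupVars η s a)) *
        weight 1 (groupVars η s m) := by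
  rw [Yfun_eq_prod_staircase hη, prod_range_succ, ← mul_assoc, prod_range, ← prod_mul_distrib]
  simp only [Wg_eq_weight]
  rfl

theorem sum_Yfun_mul_prod_Wg (hη : ∀ a : Fin m, η (a + 1) ≤ η a) {s : ℕ → ℕ → ℂ}
    (hcross : ∀ (a : Fin m) (i) (j), groupVars η s (a + 1) i ≠ groupVars η s a j)
    (htop : Function.Injective (groupVars η s m)) :
    ∑ σ : ∀ a : Fin (m + 1), Perm (Fin (η a)), Yfun (m + 2) η (sPerm (m + 2) η s σ) *
        ∏ a ∈ range (m + 1), Wg (η a) (sPerm (m + 2) η s σ a) =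
      (∏ a : Fin m,
        symStaircase 1 (lastPositions (hη a)) (groupVars η s (a + 1)) (groupVars η s a)) *
        (η m).factorial := by
  have hchain := sum_pi_prod_chain (P := fun a : Fin (m + 1) => Perm (Fin (η a)))
    (f := fun a τ ρ =>
      staircase 1 (groupVars η s (a + 1) ∘ τ) ((groupVars η s a ∘ ρ) ∘ lastPositions (hη a)) *
        weight 1 (groupVars η s a ∘ ρ))
    (fun a τ => symStaircase_comp_perm (lastPositions_covBy (hη a)) (hcross a) τ)
    fun τ => weight 1 (groupVars η s m ∘ τ)
  rw [← sum_weight_comp_perm 1 htop]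
  refine Eq.trans (sum_congr rfl fun σ _ => ?_) hchain
  have hperm := groupVars_sPerm (N := m + 2) s σ
  rw [Yfun_mul_prod_Wg hη]
  refine congrArg₂ (· * ·) (prod_congr rfl fun a _ => ?_) (congrArg _ (hperm (Fin.last m)))
  exact congrArg₂ (fun y z => staircase 1 y (z ∘ lastPositions (hη a)) * weight 1 z)
    (hperm a.succ) (hperm a.castSucc)

end Specialization

/-- `(1/η^{N−1}!) · ∏_{a=1}^{N−2} 1/(η^a − η^{a+1})! · S̄ym^η_s(Y_η(s))
= ∏_{a=1}^{N−2} G_{η^{a+1}, η^a}(s^{a+1}; s^a)`. -/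
theorem symY_eq_prod_G (N : ℕ) (hN : 2 ≤ N) (η : ℕ → ℕ)
    (hmono : ∀ a, a + 1 < N - 1 → η (a + 1) ≤ η a)
    (hpos : 1 ≤ η (N - 2))
    (s : ℕ → ℕ → ℂ)
    (hinj : ∀ a < N - 1, ∀ i < η a, ∀ j < η a, i ≠ j → s a i ≠ s a j)
    (hcross : ∀ a, 1 ≤ a → a < N - 1 → ∀ i < η a, ∀ j < η (a - 1), s a i ≠ s (a - 1) j) :
    (1 / (Nat.factorial (η (N - 2)) : ℂ)) *
      (∏ a ∈ Finset.range (N - 2), (1 / (Nat.factorial (η a - η (a + 1)) : ℂ))) *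
      (∑ σ : (a : Fin (N - 1)) → Equiv.Perm (Fin (η a)),
        Yfun N η (sPerm N η s σ) *
          ∏ a ∈ Finset.range (N - 1), Wg (η a) (fun i => sPerm N η s σ a i)) =
    ∏ a ∈ Finset.range (N - 2), G (η (a + 1)) (η a) (s (a + 1)) (s a) := by
  obtain ⟨m, rfl⟩ : ∃ m, N = m + 2 := ⟨N - 2, by omega⟩
  have hη (a : Fin m) : η (a + 1) ≤ η a := hmono a (by omega)
  have hdisj (a : Fin m) (i : Fin (η (a + 1))) (j : Fin (η a)) :
      groupVars η s (a + 1) i ≠ groupVars η s a j :=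
    hcross (a + 1) (by omega) (by omega) i i.2 j j.2
  have htop : Function.Injective (groupVars η s m) := fun i j => not_imp_not.1 fun hij =>
    hinj m (by omega) i i.2 j j.2 (Fin.val_ne_of_ne hij)
  have hfac : ((η m).factorial : ℂ) ≠ 0 := Nat.cast_ne_zero.2 (Nat.factorial_ne_zero _)
  have hG : ∏ a ∈ range m, G (η (a + 1)) (η a) (s (a + 1)) (s a) =
      (∏ a ∈ range m, (1 / ((η a - η (a + 1)).factorial : ℂ))) * ∏ a : Fin m,
        symStaircase 1 (lastPositions (hη a)) (groupVars η s (a + 1)) (groupVars η s a) := by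
    simp only [prod_range, ← prod_mul_distrib]
    exact prod_congr rfl fun a _ => G_eq_symStaircase (hη a) _ _
  rw [Nat.add_sub_cancel, hG]
  refine (congrArg _ (sum_Yfun_mul_prod_Wg hη hdisj htop)).trans ?_
  field_simp
end

section
/- Let N ≥ 2 and let η^1 ≥ η^2 ≥ … ≥ η^{N−1} ≥ 1 be positive integers. Then Σ_l S̄ym^{η̈}_{s̈}( F_l(s) ) = ∏_{a=1}^{N−2} G_{η^{a+1}, η^a}( s^{a+1}_1,…,s^{a+1}_{η^{a+1}} ; s^a_1,…,s^a_{η^a} ), where the sum is taken over all collections l of integers l^a_i (a = 1,…,N−2, i = 1,…,η^{a+1}) with 1 ≤ l^a_1 < l^a_2 < … < l^a_{η^{a+1}} ≤ η^a for each a. -/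
open scoped Classical

/-- `F_l(s)` (0-based: `a = 0, …, N−3`). -/
noncomputable def Ffun (N : ℕ) (η : ℕ → ℕ)
    (l : (a : Fin (N - 1 - 1)) → Fin (η ((a : ℕ) + 1)) → Fin (η (a : ℕ)))
    (s : ℕ → ℕ → ℂ) : ℂ :=
  ∏ a : Fin (N - 1 - 1), ∏ i : Fin (η ((a : ℕ) + 1)),
    ((s ((a : ℕ) + 1) (i : ℕ) - s (a : ℕ) ((l a i : ℕ)))⁻¹ *
      ∏ j ∈ Finset.Ioo ((l a i : ℕ)) (η (a : ℕ)),
        ((s ((a : ℕ) + 1) (i : ℕ) - s (a : ℕ) j + 1) /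
          (s ((a : ℕ) + 1) (i : ℕ) - s (a : ℕ) j)))

/-!
For a single level, the sum over `l` of the symmetrizations over the upper variables `y` and, up to
the factorial, the symmetrization over the lower variables `z` that defines `G` are both equal to
Kostov's sum over the subsets of `y`. For the former this follows by splitting off the first of the
`z`, which a selection either skips or assigns to the first of the `y`; for the latter by splitting
off the last `y` together with the last `z`. In both cases the recursion of the subset sum is a
partial fraction expansion. Kostov's sum is symmetric in `z`, so the value of one level does not
depend on how the level below has been permuted, and the levels can be summed one after another
from the top.
-/

open Finset

section PartialFractions

variable {K ι : Type*} [Field K] (S : Finset ι) (c u : ι → K)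

/-- Partial fractions in `x`. As `0⁻¹ = 0`, the products on the right effectively omit `i = m`. -/
theorem prod_one_add_mul_inv_sub (hu : Set.InjOn u S) {x : K} (hx : ∀ i ∈ S, x ≠ u i) :
    ∏ i ∈ S, (1 + c i * (x - u i)⁻¹) =
      1 + ∑ m ∈ S, c m * (x - u m)⁻¹ * ∏ i ∈ S, (1 + c i * (u m - u i)⁻¹) := by
  induction S using Finset.induction_on generalizing x with
  | empty => simp
  | insert a S ha ih =>
    have huS : Set.InjOn u S := hu.mono (by simp)
    have hne : ∀ i ∈ S, u a ≠ u i := fun i hi h =>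
      ha (hu (mem_insert_self a S) (mem_insert_of_mem hi) h ▸ hi)
    have hxa : x - u a ≠ 0 := sub_ne_zero.mpr (hx a (mem_insert_self a S))
    have pole_split : ∀ m ∈ S, (x - u m)⁻¹ * (u m - u a)⁻¹ =
        (x - u a)⁻¹ * ((x - u m)⁻¹ - (u a - u m)⁻¹) := by
      intro m hm
      have hxm : x - u m ≠ 0 := sub_ne_zero.mpr (hx m (mem_insert_of_mem hm))
      have ham : u a - u m ≠ 0 := sub_ne_zero.mpr (hne m hm)
      rw [← neg_sub (u a) (u m)]
      field_simp
      ring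
    have summand : ∀ m ∈ S, c m * (x - u m)⁻¹ * ∏ i ∈ insert a S, (1 + c i * (u m - u i)⁻¹) =
        (1 + c a * (x - u a)⁻¹) * (c m * (x - u m)⁻¹ * ∏ i ∈ S, (1 + c i * (u m - u i)⁻¹)) -
          c a * (x - u a)⁻¹ * (c m * (u a - u m)⁻¹ * ∏ i ∈ S, (1 + c i * (u m - u i)⁻¹)) := by
      intro m hm
      rw [prod_insert ha]
      linear_combination
        (c m * c a * ∏ i ∈ S, (1 + c i * (u m - u i)⁻¹)) * pole_split m hm
    rw [prod_insert ha, sum_insert ha, sum_congr rfl summand, sum_sub_distrib, ← mul_sum,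
      ← mul_sum, prod_insert ha, sub_self, inv_zero, ih huS hne,
      ih huS fun i hi => hx i (mem_insert_of_mem hi)]
    ring

theorem sum_mul_prod_one_add_mul_inv_sub (hu : Set.InjOn u S) :
    ∑ m ∈ S, c m * ∏ i ∈ S, (1 + c i * (u m - u i)⁻¹) = ∑ m ∈ S, c m := by
  induction S using Finset.induction_on with
  | empty => simp
  | insert a S ha ih =>
    have huS : Set.InjOn u S := hu.mono (by simp)
    have hne : ∀ i ∈ S, u a ≠ u i := fun i hi h =>
      ha (hu (mem_insert_self a S) (mem_insert_of_mem hi) h ▸ hi)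
    have summand : ∀ m ∈ S, c m * ∏ i ∈ insert a S, (1 + c i * (u m - u i)⁻¹) =
        c m * ∏ i ∈ S, (1 + c i * (u m - u i)⁻¹) -
          c a * (c m * (u a - u m)⁻¹ * ∏ i ∈ S, (1 + c i * (u m - u i)⁻¹)) := by
      intro m _
      rw [prod_insert ha, ← neg_sub (u a) (u m), inv_neg]
      ring
    rw [sum_insert ha, sum_insert ha, sum_congr rfl summand, sum_sub_distrib, ← mul_sum, ih huS,
      prod_insert ha, sub_self, inv_zero, prod_one_add_mul_inv_sub S c u huS hne]
    ring

end PartialFractions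

section ShiftRatio

variable {K ι : Type*} [Field K]

/-- The elementary factor `(x - u + 1) / (x - u)`. The form `1 + (x - u)⁻¹` takes the value `1` on
the diagonal, so that products over the pairs of distinct elements may be taken over all pairs. -/
def shiftRatio (x u : K) : K := 1 + (x - u)⁻¹

@[simp]
theorem shiftRatio_self (x : K) : shiftRatio x x = 1 := by simp [shiftRatio]

theorem add_one_div_eq_shiftRatio {x u : K} (h : x ≠ u) :
    (x - u + 1) / (x - u) = shiftRatio x u := by
  rw [add_div, div_self (sub_ne_zero.mpr h), one_div, shiftRatio]

theorem shiftRatio_eq_one_add_neg (x u : K) : shiftRatio x u = 1 + -1 * (u - x)⁻¹ := by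
  rw [shiftRatio, ← neg_sub u x, inv_neg, neg_one_mul]

theorem sub_one_div_eq_shiftRatio {x u : K} (h : x ≠ u) :
    (x - u - 1) / (x - u) = shiftRatio u x := by
  rw [sub_div, div_self (sub_ne_zero.mpr h), one_div, shiftRatio_eq_one_add_neg, neg_one_mul,
    sub_eq_add_neg]

theorem prod_shiftRatio_mul_prod_shiftRatio (S : Finset ι) {z : ι → K} (hz : Set.InjOn z S)
    (D : Finset K) (hzD : ∀ j ∈ S, z j ∉ D) {x : K} (hxz : ∀ j ∈ S, x ≠ z j) (hxD : x ∉ D) :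
    (∏ j ∈ S, shiftRatio x (z j)) * ∏ i ∈ D, shiftRatio i x =
      1 + ∑ m ∈ S, (x - z m)⁻¹ *
          ((∏ j ∈ S, shiftRatio (z m) (z j)) * ∏ i ∈ D, shiftRatio i (z m)) -
        ∑ k ∈ D, (x - k)⁻¹ * ((∏ j ∈ S, shiftRatio k (z j)) * ∏ i ∈ D, shiftRatio i k) := by
  have hinj : Set.InjOn (Sum.elim z id) (S.disjSum D) := by
    rintro (i | i) hi (j | j) hj h <;>
      simp only [mem_coe, inl_mem_disjSum, inr_mem_disjSum, Sum.elim_inl, Sum.elim_inr, id] at *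
    · rw [hz hi hj h]
    · exact absurd (h ▸ hj) (hzD i hi)
    · exact absurd (h ▸ hi) (hzD j hj)
    · rw [h]
  have hx : ∀ i ∈ S.disjSum D, x ≠ Sum.elim z id i := by
    rintro (j | k) h <;> simp only [inl_mem_disjSum, inr_mem_disjSum] at h
    · exact hxz j h
    · exact fun e => hxD (e ▸ h)
  have key := prod_one_add_mul_inv_sub _ (Sum.elim (fun _ => 1) fun _ => -1) _ hinj hx
  simp only [prod_disjSum, sum_disjSum, Sum.elim_inl, Sum.elim_inr, id,
    ← shiftRatio_eq_one_add_neg] at key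
  have hshift : ∀ x u : K, 1 + (x - u)⁻¹ = shiftRatio x u := fun _ _ => rfl
  simp only [one_mul, hshift] at key
  rw [key, add_sub_assoc, sub_eq_add_neg, ← sum_neg_distrib]
  simp only [neg_mul, one_mul]

theorem prod_shiftRatio_left (A : Finset K) {x : K} (hx : x ∉ A) :
    ∏ j ∈ A, shiftRatio x j = 1 + ∑ k ∈ A, (x - k)⁻¹ * ∏ j ∈ A, shiftRatio k j := by
  simpa using prod_shiftRatio_mul_prod_shiftRatio A (z := id) (Set.injOn_id _) ∅ (by simp)
    (fun j hj => (ne_of_mem_of_not_mem hj hx).symm) (notMem_empty x)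

theorem prod_shiftRatio_right (A : Finset K) {x : K} (hx : x ∉ A) :
    ∏ j ∈ A, shiftRatio j x = 1 + ∑ k ∈ A, (k - x)⁻¹ * ∏ j ∈ A, shiftRatio j k := by
  have key := prod_shiftRatio_mul_prod_shiftRatio (∅ : Finset K) (z := id) (by simp) A (by simp)
    (by simp) hx
  simp only [prod_empty, sum_empty, one_mul, add_zero, sub_eq_add_neg, ← sum_neg_distrib] at key
  simpa only [← neg_mul, ← inv_neg, neg_sub, ← sub_eq_add_neg] using key

theorem sum_prod_shiftRatio (S : Finset ι) {z : ι → K} (hz : Set.InjOn z S) :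
    ∑ m ∈ S, ∏ j ∈ S, shiftRatio (z m) (z j) = #S := by
  simpa [shiftRatio] using sum_mul_prod_one_add_mul_inv_sub S 1 z hz

end ShiftRatio

section KostovSum

variable {K ι : Type*} [Field K] (f : K → K)

/-- The summand of `kostovSum` attached to a decomposition of the index set into `A` and `D`. -/
def kostovTerm (A D : Finset K) : K :=
  (-1) ^ #D * (∏ k ∈ A, f k) * ∏ k ∈ A, ∏ i ∈ D, shiftRatio i k

variable {A D Y : Finset K}

theorem kostovTerm_mul (g : K → K) :
    kostovTerm (fun k => g k * f k) A D = (∏ k ∈ A, g k) * kostovTerm f A D := by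
  simp only [kostovTerm, prod_mul_distrib]
  ring

theorem kostovTerm_congr {g : K → K} (h : ∀ k ∈ A, f k = g k) :
    kostovTerm f A D = kostovTerm g A D := by
  rw [kostovTerm, kostovTerm, prod_congr rfl h]

variable [DecidableEq K]

/-- Kostov's subset sum
`∑_{A ⊆ Y} (-1)^|Y \ A| ∏_{k ∈ A} f k ∏_{k ∈ A, i ∈ Y \ A} (k - i - 1) / (k - i)`. For
`f k = ∏_z (k - z + 1) / (k - z)` it is the common closed form of the two symmetrizations compared
below. -/
def kostovSum (Y : Finset K) : K := ∑ A ∈ Y.powerset, kostovTerm f A (Y \ A)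

@[simp]
theorem kostovSum_empty : kostovSum f ∅ = 1 := by simp [kostovSum, kostovTerm]

theorem kostovTerm_insert_left {k : K} (hk : k ∉ A) :
    kostovTerm f (insert k A) D = f k * (∏ i ∈ D, shiftRatio i k) * kostovTerm f A D := by
  simp only [kostovTerm, prod_insert hk]
  ring

theorem kostovTerm_insert_right {k : K} (hk : k ∉ D) :
    kostovTerm f A (insert k D) = -(∏ j ∈ A, shiftRatio k j) * kostovTerm f A D := by
  simp only [kostovTerm, prod_insert hk, card_insert_of_notMem hk, pow_succ, prod_mul_distrib]
  ring

theorem sum_sum_powerset_erase {α M : Type*} [DecidableEq α] [AddCommMonoid M] (Y : Finset α)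
    (g : α → Finset α → M) :
    ∑ k ∈ Y, ∑ A ∈ (Y.erase k).powerset, g k A =
      ∑ B ∈ Y.powerset, ∑ k ∈ B, g k (B.erase k) := by
  rw [sum_sigma', sum_sigma']
  refine sum_bij' (fun p _ => ⟨insert p.1 p.2, p.1⟩) (fun p _ => ⟨p.2, p.1.erase p.2⟩)
    ?_ ?_ ?_ ?_ ?_ <;> rintro ⟨a, b⟩ h <;>
    simp only [mem_sigma, mem_powerset, subset_erase] at h ⊢
  · exact ⟨insert_subset h.1 h.2.1, mem_insert_self _ _⟩
  · exact ⟨h.1 h.2, (erase_subset _ _).trans h.1, notMem_erase _ _⟩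
  · rw [erase_insert h.2.2]
  · rw [insert_erase h.2]
  · rw [erase_insert h.2.2]

theorem kostovSum_shiftRatio_mul {z : K} (hz : z ∉ Y) :
    kostovSum (fun k => shiftRatio k z * f k) Y = kostovSum f Y +
      ∑ k ∈ Y, (k - z)⁻¹ * f k * (∏ i ∈ Y, shiftRatio i k) * kostovSum f (Y.erase k) := by
  have removed : ∀ B ∈ Y.powerset, ∀ k ∈ B,
      (k - z)⁻¹ * f k * (∏ i ∈ Y, shiftRatio i k) *
          kostovTerm f (B.erase k) (Y.erase k \ B.erase k) =
        (k - z)⁻¹ * (∏ j ∈ B, shiftRatio j k) * kostovTerm f B (Y \ B) := by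
    intro B hB k hk
    conv_rhs => rw [← insert_erase hk, kostovTerm_insert_left f (notMem_erase k B), insert_erase hk]
    have hD : Y.erase k \ B.erase k = Y \ B := by grind
    rw [hD, ← prod_sdiff (mem_powerset.mp hB)]
    ring
  simp only [kostovSum, mul_sum]
  rw [sum_sum_powerset_erase Y, ← sum_add_distrib]
  refine sum_congr rfl fun B hB => ?_
  rw [kostovTerm_mul, sum_congr rfl (removed B hB), ← sum_mul,
    prod_shiftRatio_right B fun h => hz (mem_powerset.mp hB h)]
  ring

/-- Moving `k` from `D = Y \ A` into `A` flips the sign of the summand. -/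
theorem sum_kostovTerm_exchange (Y : Finset K) (h : K → K) :
    ∑ A ∈ Y.powerset, ∑ k ∈ Y \ A,
        h k * (f k * ∏ i ∈ Y \ A, shiftRatio i k) * kostovTerm f A (Y \ A) =
      -∑ A ∈ Y.powerset, ∑ k ∈ A,
        h k * (∏ j ∈ A, shiftRatio k j) * kostovTerm f A (Y \ A) := by
  have exchange : ∀ k ∈ Y, ∀ A ∈ (Y.erase k).powerset,
      h k * (f k * ∏ i ∈ Y \ A, shiftRatio i k) * kostovTerm f A (Y \ A) =
        -(h k * (∏ j ∈ insert k A, shiftRatio k j) *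
          kostovTerm f (insert k A) (Y \ insert k A)) := by
    intro k hk A hA
    have hkA : k ∉ A := (subset_erase.mp (mem_powerset.mp hA)).2
    have hD : Y \ A = insert k (Y \ insert k A) := by
      rw [sdiff_insert, insert_erase (mem_sdiff.mpr ⟨hk, hkA⟩)]
    have hkD : k ∉ Y \ insert k A := by simp
    rw [hD, kostovTerm_insert_right f hkD, kostovTerm_insert_left f hkA, prod_insert hkD,
      prod_insert hkA, shiftRatio_self]
    ring
  rw [sum_comm' (t' := Y) (s' := fun k => (Y.erase k).powerset) (by
      intro A k
      simp only [mem_powerset, mem_sdiff, subset_erase]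
      tauto),
    sum_congr rfl fun k hk => sum_congr rfl (exchange k hk), sum_sum_powerset_erase Y,
    ← sum_neg_distrib]
  refine sum_congr rfl fun B _ => ?_
  rw [← sum_neg_distrib]
  exact sum_congr rfl fun k hk => by rw [insert_erase hk]

theorem kostovSum_insert {y : K} (hy : y ∉ Y) :
    kostovSum f (insert y Y) = ∑ A ∈ Y.powerset,
      (f y * (∏ i ∈ Y \ A, shiftRatio i y) - ∏ j ∈ A, shiftRatio y j) *
        kostovTerm f A (Y \ A) := by
  rw [kostovSum, sum_powerset_insert hy, ← sum_add_distrib]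
  refine sum_congr rfl fun A hA => ?_
  have hyA : y ∉ A := fun h => hy (mem_powerset.mp hA h)
  rw [insert_sdiff_of_notMem _ hyA, insert_sdiff_insert, sdiff_insert_of_notMem hy,
    kostovTerm_insert_left f hyA, kostovTerm_insert_right f fun h => hy (mem_sdiff.mp h).1]
  ring

theorem kostovSum_prod_shiftRatio_insert [DecidableEq ι] (S : Finset ι) {z : ι → K}
    (hz : Set.InjOn z S) {y : K} (hyY : y ∉ Y) (hyz : ∀ j ∈ S, y ≠ z j) (hzY : ∀ j ∈ S, z j ∉ Y) :
    kostovSum (fun x => ∏ j ∈ S, shiftRatio x (z j)) (insert y Y) =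
      ∑ m ∈ S, (y - z m)⁻¹ * (∏ j ∈ S, shiftRatio (z m) (z j)) *
        (∏ i ∈ Y, shiftRatio i (z m)) *
        kostovSum (fun x => ∏ j ∈ S.erase m, shiftRatio x (z j)) Y := by
  set f : K → K := fun x => ∏ j ∈ S, shiftRatio x (z j)
  have removed : ∀ m ∈ S, ∀ A ∈ Y.powerset, (∏ i ∈ Y, shiftRatio i (z m)) *
        kostovTerm (fun x => ∏ j ∈ S.erase m, shiftRatio x (z j)) A (Y \ A) =
      (∏ i ∈ Y \ A, shiftRatio i (z m)) * kostovTerm f A (Y \ A) := by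
    intro m hm A hA
    have hfm : ∀ x, f x = shiftRatio x (z m) * ∏ j ∈ S.erase m, shiftRatio x (z j) := fun x =>
      (mul_prod_erase S (fun j => shiftRatio x (z j)) hm).symm
    rw [kostovTerm_congr f fun x _ => hfm x, kostovTerm_mul, ← prod_sdiff (mem_powerset.mp hA)]
    ring
  have expanded : ∀ A ∈ Y.powerset,
      (f y * (∏ i ∈ Y \ A, shiftRatio i y) - ∏ j ∈ A, shiftRatio y j) * kostovTerm f A (Y \ A) =
        ∑ m ∈ S, (y - z m)⁻¹ * (f (z m) * ∏ i ∈ Y \ A, shiftRatio i (z m)) *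
            kostovTerm f A (Y \ A) -
          (∑ k ∈ Y \ A, (y - k)⁻¹ * (f k * ∏ i ∈ Y \ A, shiftRatio i k) * kostovTerm f A (Y \ A) +
            ∑ k ∈ A, (y - k)⁻¹ * (∏ j ∈ A, shiftRatio k j) * kostovTerm f A (Y \ A)) := by
    intro A hA
    rw [prod_shiftRatio_mul_prod_shiftRatio S hz (Y \ A)
        (fun j hj h => hzY j hj (mem_sdiff.mp h).1) hyz fun h => hyY (mem_sdiff.mp h).1,
      prod_shiftRatio_left A fun h => hyY (mem_powerset.mp hA h), ← sum_mul, ← sum_mul, ← sum_mul]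
    ring
  rw [kostovSum_insert f hyY, sum_congr rfl expanded, sum_sub_distrib, sum_add_distrib,
    sum_kostovTerm_exchange, neg_add_cancel, sub_zero, sum_comm]
  refine sum_congr rfl fun m hm => ?_
  rw [mul_assoc, kostovSum, mul_sum, mul_sum]
  refine sum_congr rfl fun A hA => ?_
  rw [removed m hm A hA]
  ring

theorem kostovSum_one_of_nonempty (hY : Y.Nonempty) : kostovSum (fun _ => (1 : K)) Y = 0 := by
  obtain ⟨y, hy⟩ := hY
  rw [← insert_erase hy]
  simpa using kostovSum_prod_shiftRatio_insert (∅ : Finset K) (z := id) (by simp)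
    (notMem_erase y Y) (by simp) (by simp)

end KostovSum

section TupleSums

theorem sum_perm_insertNth {α M : Type*} [AddCommMonoid M] {n : ℕ} (k : Fin (n + 1))
    (x : Fin (n + 1) → α) (Φ : (Fin (n + 1) → α) → M) :
    ∑ σ : Equiv.Perm (Fin (n + 1)), Φ (x ∘ σ) =
      ∑ m, ∑ e : Equiv.Perm (Fin n), Φ (k.insertNth (x m) (m.removeNth x ∘ e)) := by
  let glue : Fin (n + 1) × Equiv.Perm (Fin n) → Equiv.Perm (Fin (n + 1)) := fun p =>
    p.1.cycleRange.symm * Equiv.Perm.decomposeFin.symm (0, p.2) * k.cycleRange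
  have glue_self : ∀ p, glue p k = p.1 := fun p => by simp [glue]
  have glue_succAbove : ∀ p i, glue p (k.succAbove i) = p.1.succAbove (p.2 i) := fun p i => by
    simp [glue]
  have glue_injective : Function.Injective glue := by
    rintro ⟨m, e⟩ ⟨m', e'⟩ h
    obtain rfl : m = m' := by simpa [glue_self] using congr($h k)
    refine Prod.ext rfl (Equiv.ext fun i => m.succAbove_right_injective ?_)
    simpa [glue_succAbove] using congr($h (k.succAbove i))
  have glue_bijective : Function.Bijective glue :=
    (Fintype.bijective_iff_injective_and_card glue).mpr ⟨glue_injective, by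
      simp [Fintype.card_perm, Nat.factorial_succ]⟩
  rw [← Fintype.sum_prod_type']
  symm
  refine Fintype.sum_bijective glue glue_bijective _ _ fun p => congrArg Φ ?_
  rw [Fin.insertNth_eq_iff, Function.comp_apply, glue_self]
  exact ⟨rfl, funext fun i => by simp [Fin.removeNth, glue_succAbove]⟩

theorem exists_succ_comp_eq {n r : ℕ} {l : Fin n → Fin (r + 1)} (h : ∀ i, l i ≠ 0) :
    ∃ l' : Fin n → Fin r, Fin.succ ∘ l' = l := by
  choose l' hl' using fun i => Fin.exists_succ_eq.mpr (h i)
  exact ⟨l', funext hl'⟩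

theorem strictMono_succ_comp_iff {n r : ℕ} {l : Fin n → Fin r} :
    StrictMono (Fin.succ ∘ l) ↔ StrictMono l :=
  ⟨fun h _ _ hij => Fin.succ_lt_succ_iff.mp (h hij), Fin.strictMono_succ.comp⟩

theorem strictMono_iff_succ_comp_or_cons_zero {p r : ℕ} {l : Fin (p + 1) → Fin (r + 1)} :
    StrictMono l ↔ (∃ l' : Fin (p + 1) → Fin r, StrictMono l' ∧ Fin.succ ∘ l' = l) ∨
      ∃ l' : Fin p → Fin r, StrictMono l' ∧ Fin.cons 0 (Fin.succ ∘ l') = l := by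
  constructor
  · intro hl
    by_cases h0 : l 0 = 0
    · obtain ⟨l', hl'⟩ := exists_succ_comp_eq fun i : Fin p => (hl i.succ_pos).ne_bot
      have hcons : Fin.cons 0 (Fin.succ ∘ l') = l := by
        rw [hl', ← h0]
        exact Fin.cons_self_tail l
      exact .inr ⟨l', strictMono_succ_comp_iff.mp (hl' ▸ hl.comp Fin.strictMono_succ), hcons⟩
    · obtain ⟨l', rfl⟩ := exists_succ_comp_eq fun i =>
        ((Fin.pos_of_ne_zero h0).trans_le (hl.monotone i.zero_le)).ne'
      exact .inl ⟨l', strictMono_succ_comp_iff.mp hl, rfl⟩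
  · rintro (⟨l', hl', rfl⟩ | ⟨l', hl', rfl⟩)
    · exact strictMono_succ_comp_iff.mpr hl'
    · exact Fin.strictMono_cons.mpr ⟨fun _ => Fin.succ_pos _, strictMono_succ_comp_iff.mpr hl'⟩

theorem sum_strictMono_succ {M : Type*} [AddCommMonoid M] {p r : ℕ}
    (Φ : (Fin (p + 1) → Fin (r + 1)) → M) :
    ∑ l with StrictMono l, Φ l =
      ∑ l : Fin (p + 1) → Fin r with StrictMono l, Φ (Fin.succ ∘ l) +
        ∑ l : Fin p → Fin r with StrictMono l, Φ (Fin.cons 0 (Fin.succ ∘ l)) := by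
  have succ_comp_injective : ∀ n, Function.Injective fun l : Fin n → Fin r => Fin.succ ∘ l :=
    fun n => (Fin.succ_injective r).comp_left
  have cons_injective : Function.Injective fun l : Fin p → Fin r =>
      (Fin.cons 0 (Fin.succ ∘ l) : Fin (p + 1) → Fin (r + 1)) := fun l l' h =>
    succ_comp_injective p (Fin.cons_right_injective _ h)
  have hunion : (univ.filter fun l : Fin (p + 1) → Fin (r + 1) => StrictMono l) =
      (univ.filter fun l : Fin (p + 1) → Fin r => StrictMono l).image (Fin.succ ∘ ·) ∪
        (univ.filter fun l : Fin p → Fin r => StrictMono l).image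
          fun l => Fin.cons 0 (Fin.succ ∘ l) := by
    ext l
    simp only [mem_union, mem_image, mem_filter_univ, strictMono_iff_succ_comp_or_cons_zero]
  rw [hunion, sum_union, sum_image (succ_comp_injective _).injOn, sum_image cons_injective.injOn]
  simp only [disjoint_left, mem_image, not_exists, not_and]
  rintro _ ⟨l, -, rfl⟩ l' - h
  exact Fin.succ_ne_zero (l 0) congr($h 0).symm

theorem sum_prod_castSucc_succ {R : Type*} [CommSemiring R] {n : ℕ} {P : Fin (n + 1) → Type*}
    [∀ a, Fintype (P a)] [DecidableEq (P 0)]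
    {k : (a : Fin n) → P a.castSucc → P a.succ → R} {g : Fin n → R}
    (hg : ∀ a x, ∑ t, k a x t = g a) (x : P 0) :
    ∑ σ : (a : Fin (n + 1)) → P a with σ 0 = x, ∏ a, k a (σ a.castSucc) (σ a.succ) = ∏ a, g a := by
  induction n with
  | zero =>
    simp only [univ_eq_empty, prod_empty, sum_filter]
    exact ((Equiv.piUnique fun a : Fin 1 => P a).sum_comp fun t =>
      if t = x then (1 : R) else 0).trans (by simp)
  | succ n ih =>
    have tail_sum := fun t : P 1 => ih (P := fun a => P a.succ)
      (k := fun a => k a.succ) (g := fun a => g a.succ) (fun a => hg a.succ) t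
    calc ∑ σ : (a : Fin (n + 2)) → P a with σ 0 = x, ∏ a, k a (σ a.castSucc) (σ a.succ)
        = ∑ τ : (a : Fin (n + 1)) → P a.succ,
            k 0 x (τ 0) * ∏ a : Fin n, k a.succ (τ a.castSucc) (τ a.succ) := by
          rw [sum_filter, ← (Fin.consEquiv P).sum_comp, Fintype.sum_prod_type]
          simp only [Fin.consEquiv, Equiv.coe_fn_mk, Fin.cons_zero]
          rw [sum_eq_single x (by simp +contextual) (by simp)]
          refine sum_congr rfl fun τ _ => ?_
          rw [if_pos rfl, Fin.prod_univ_succ]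
          rfl
      _ = ∑ t, k 0 x t * ∑ τ : (a : Fin (n + 1)) → P a.succ with τ 0 = t,
            ∏ a : Fin n, k a.succ (τ a.castSucc) (τ a.succ) := by
          rw [← Finset.sum_fiberwise _ (fun τ => τ 0)]
          refine sum_congr rfl fun t _ => ?_
          rw [mul_sum]
          exact sum_congr rfl fun τ hτ => by rw [(mem_filter_univ _).mp hτ]
      _ = ∏ a, g a := by
          rw [sum_congr rfl fun t _ => congrArg (k 0 x t * ·) (tail_sum t), ← sum_mul,
            Fin.prod_univ_succ]
          exact congrArg (· * _) (hg 0 x)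

theorem image_removeNth {α : Type*} [DecidableEq α] {n : ℕ} {x : Fin (n + 1) → α}
    (hx : Function.Injective x) (m : Fin (n + 1)) :
    univ.image (m.removeNth x) = (univ.image x).erase (x m) := by
  have hcomp : m.removeNth x = x ∘ m.succAbove := rfl
  rw [hcomp, ← image_image, Fin.image_succAbove_univ, compl_eq_univ_sdiff, image_sdiff _ _ hx,
    image_singleton, sdiff_singleton_eq_erase]

theorem image_eq_insert_image_init {α : Type*} [DecidableEq α] {n : ℕ} (x : Fin (n + 1) → α) :
    univ.image x = insert (x (Fin.last n)) (univ.image (Fin.init x)) := by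
  ext a
  simp [Fin.exists_fin_succ', Fin.init, or_comm, eq_comm]

theorem prod_univ_erase {M : Type*} [CommMonoid M] {n : ℕ} (m : Fin (n + 1))
    (f : Fin (n + 1) → M) : ∏ j ∈ univ.erase m, f j = ∏ j, f (m.succAbove j) := by
  rw [← sdiff_singleton_eq_erase, ← compl_eq_univ_sdiff, ← Fin.image_succAbove_univ,
    prod_image m.succAbove_right_injective.injOn]

theorem prod_Ioi_castSucc {M : Type*} [CommMonoid M] {n : ℕ} (i : Fin n) (f : Fin (n + 1) → M) :
    ∏ j ∈ Ioi i.castSucc, f j = f (Fin.last n) * ∏ j ∈ Ioi i, f j.castSucc := by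
  have hIoi : Ioi i.castSucc = insert (Fin.last n) ((Ioi i).map Fin.castSuccEmb) := by
    rw [Fin.map_castSuccEmb_Ioi, Ioo_insert_right i.castSucc_lt_last]
    exact (Ioc_top).symm
  rw [hIoi, prod_insert (by simp), prod_map]
  rfl

end TupleSums

section WeightedSymmetrization

variable {K : Type*} [Field K] {n p q r : ℕ}

/-- The weight `W_n(t) = ∏_{i < j} (t i - t j - 1) / (t i - t j)`, whose factors are
`shiftRatio (t j) (t i)`. -/
def pairWeight (t : Fin n → K) : K := ∏ i, ∏ j ∈ Ioi i, shiftRatio (t j) (t i)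

/-- The weighted symmetrization `S̄ym f`, evaluated at the tuple `t`. -/
def weightedSym (f : (Fin n → K) → K) (t : Fin n → K) : K :=
  ∑ σ : Equiv.Perm (Fin n), f (t ∘ σ) * pairWeight (t ∘ σ)

theorem pairWeight_cons (a : K) (t : Fin n → K) :
    pairWeight (Fin.cons a t : Fin (n + 1) → K) = (∏ i, shiftRatio (t i) a) * pairWeight t := by
  simp only [pairWeight, Fin.prod_univ_succ, Fin.prod_Ioi_zero, Fin.prod_Ioi_succ, Fin.cons_zero,
    Fin.cons_succ]

theorem pairWeight_snoc (t : Fin n → K) (a : K) :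
    pairWeight (Fin.snoc t a : Fin (n + 1) → K) = (∏ i, shiftRatio a (t i)) * pairWeight t := by
  have hIoi : Ioi (Fin.last n) = ∅ := Ioi_top
  simp only [pairWeight, Fin.prod_univ_castSucc, prod_Ioi_castSucc, Fin.snoc_castSucc,
    Fin.snoc_last, hIoi, prod_empty, mul_one, prod_mul_distrib]

theorem weightedSym_const_mul (c : K) (f : (Fin n → K) → K) (t : Fin n → K) :
    weightedSym (fun u => c * f u) t = c * weightedSym f t := by
  simp only [weightedSym, mul_assoc, mul_sum]

theorem weightedSym_comp_perm (f : (Fin n → K) → K) (t : Fin n → K) (e : Equiv.Perm (Fin n)) :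
    weightedSym f (t ∘ e) = weightedSym f t :=
  Equiv.sum_comp (Equiv.mulLeft e) fun σ : Equiv.Perm (Fin n) => f (t ∘ σ) * pairWeight (t ∘ σ)

theorem weightedSym_eq_sum_cons (f : (Fin (n + 1) → K) → K) (t : Fin (n + 1) → K) :
    weightedSym f t = ∑ m, (∏ i, shiftRatio (t i) (t m)) *
      weightedSym (fun u => f (Fin.cons (t m) u)) (m.removeNth t) := by
  rw [weightedSym, sum_perm_insertNth 0 t fun u => f u * pairWeight u]
  refine sum_congr rfl fun m _ => ?_
  simp only [weightedSym, mul_sum, Fin.insertNth_zero', pairWeight_cons, Function.comp_apply]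
  refine sum_congr rfl fun e _ => ?_
  rw [Equiv.prod_comp e fun i => shiftRatio (m.removeNth t i) (t m), Fin.prod_univ_succAbove _ m,
    shiftRatio_self, one_mul, mul_left_comm]
  rfl

theorem weightedSym_eq_sum_snoc (f : (Fin (n + 1) → K) → K) (t : Fin (n + 1) → K) :
    weightedSym f t = ∑ m, (∏ i, shiftRatio (t m) (t i)) *
      weightedSym (fun u => f (Fin.snoc u (t m))) (m.removeNth t) := by
  rw [weightedSym, sum_perm_insertNth (Fin.last n) t fun u => f u * pairWeight u]
  refine sum_congr rfl fun m _ => ?_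
  simp only [weightedSym, mul_sum, Fin.insertNth_last', pairWeight_snoc, Function.comp_apply]
  refine sum_congr rfl fun e _ => ?_
  rw [Equiv.prod_comp e fun i => shiftRatio (t m) (m.removeNth t i), Fin.prod_univ_succAbove _ m,
    shiftRatio_self, one_mul, mul_left_comm]
  rfl

theorem weightedSym_one {t : Fin n → K} (ht : Function.Injective t) :
    weightedSym (fun _ => 1) t = n.factorial := by
  induction n with
  | zero => simp [weightedSym, pairWeight]
  | succ n ih =>
    rw [weightedSym_eq_sum_snoc, sum_congr rfl fun m _ => congrArg _
        (ih (t := m.removeNth t) (ht.comp m.succAbove_right_injective)),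
      ← sum_mul, sum_prod_shiftRatio univ ht.injOn]
    simp [Nat.factorial_succ]

/-- The factor of `F_l` in which a level `y` meets the level `z` below it. For `l = Fin.natAdd q` it
is the function symmetrized in `G_{p, q + p}`. -/
def selectionProduct (l : Fin p → Fin r) (y : Fin p → K) (z : Fin r → K) : K :=
  ∏ i, (y i - z (l i))⁻¹ * ∏ j ∈ Ioi (l i), shiftRatio (y i) (z j)

theorem selectionProduct_succ_comp (l : Fin p → Fin r) (y : Fin p → K) (z : Fin (r + 1) → K) :
    selectionProduct (Fin.succ ∘ l) y z = selectionProduct l y (Fin.tail z) := by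
  simp only [selectionProduct, Function.comp_apply, Fin.prod_Ioi_succ, Fin.tail]

theorem selectionProduct_cons_zero (l : Fin p → Fin r) (a : K) (y : Fin p → K)
    (z : Fin (r + 1) → K) :
    selectionProduct (Fin.cons 0 (Fin.succ ∘ l) : Fin (p + 1) → Fin (r + 1))
        (Fin.cons a y : Fin (p + 1) → K) z =
      ((a - z 0)⁻¹ * ∏ j, shiftRatio a (Fin.tail z j)) * selectionProduct l y (Fin.tail z) := by
  rw [← selectionProduct_succ_comp]
  simp only [selectionProduct, Fin.prod_univ_succ, Fin.cons_zero, Fin.cons_succ, Fin.prod_Ioi_zero,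
    Fin.tail]

theorem selectionProduct_snoc_last (l : Fin p → Fin r) (y : Fin (p + 1) → K) (w : Fin r → K)
    (c : K) :
    selectionProduct (Fin.snoc (Fin.castSucc ∘ l) (Fin.last r) : Fin (p + 1) → Fin (r + 1)) y
        (Fin.snoc w c : Fin (r + 1) → K) =
      ((y (Fin.last p) - c)⁻¹ * ∏ i, shiftRatio (Fin.init y i) c) *
        selectionProduct l (Fin.init y) w := by
  have hIoi : Ioi (Fin.last r) = ∅ := Ioi_top
  simp only [selectionProduct, Fin.prod_univ_castSucc, hIoi, prod_Ioi_castSucc, Fin.snoc_castSucc,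
    Fin.snoc_last, Function.comp_apply, prod_empty, mul_one, Fin.init, prod_mul_distrib]
  ring

theorem natAdd_eq_snoc (q p : ℕ) :
    (Fin.natAdd q : Fin (p + 1) → Fin (q + p + 1)) =
      Fin.snoc (Fin.castSucc ∘ Fin.natAdd q) (Fin.last (q + p)) :=
  funext <| Fin.lastCases (by simp) (by simp)

theorem selectionProduct_natAdd (y : Fin p → K) (z : Fin (q + p) → K) :
    selectionProduct (Fin.natAdd q) y z = ∏ i, (y i - z (Fin.natAdd q i))⁻¹ *
      ∏ j ∈ Ioi i, shiftRatio (y i) (z (Fin.natAdd q j)) := by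
  simp only [selectionProduct, ← Fin.map_natAddEmb_Ioi, prod_map, Fin.natAddEmb_apply]

theorem sum_weightedSym_selectionProduct [DecidableEq K] {y : Fin p → K} {z : Fin r → K}
    (hy : Function.Injective y) (hyz : ∀ i j, y i ≠ z j) :
    ∑ l : Fin p → Fin r with StrictMono l, weightedSym (fun u => selectionProduct l u z) y =
      kostovSum (fun k => ∏ j, shiftRatio k (z j)) (univ.image y) := by
  induction r generalizing p with
  | zero =>
    cases p with
    | zero => simp [weightedSym, selectionProduct, pairWeight, Subsingleton.strictMono]
    | succ p => simpa using (kostovSum_one_of_nonempty (univ_nonempty.image y)).symm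
  | succ r ih =>
    have hyz' : ∀ i j, y i ≠ Fin.tail z j := fun i j => hyz i j.succ
    cases p with
    | zero => simp [weightedSym, selectionProduct, pairWeight, Subsingleton.strictMono]
    | succ p =>
      have hz0 : z 0 ∉ univ.image y := by simpa using fun i => hyz i 0
      have rest_sum : ∀ m, ∑ l : Fin p → Fin r with StrictMono l,
          weightedSym (fun u => selectionProduct l u (Fin.tail z)) (m.removeNth y) =
            kostovSum (fun k => ∏ j, shiftRatio k (Fin.tail z j)) ((univ.image y).erase (y m)) :=
        fun m => by
          rw [ih (y := m.removeNth y) (hy.comp m.succAbove_right_injective) fun i => hyz' _,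
            image_removeNth hy]
      simp only [Fin.prod_univ_succ (n := r)]
      rw [sum_strictMono_succ, kostovSum_shiftRatio_mul _ hz0, sum_image hy.injOn]
      congr 1
      · simp only [selectionProduct_succ_comp]
        exact ih hy hyz'
      · simp only [weightedSym_eq_sum_cons, selectionProduct_cons_zero, weightedSym_const_mul,
          prod_image hy.injOn]
        rw [sum_comm]
        refine sum_congr rfl fun m _ => ?_
        rw [← mul_sum, ← mul_sum, rest_sum]
        simp only [Fin.tail]
        ring

theorem weightedSym_selectionProduct_snoc_last [DecidableEq K] {y : Fin (p + 1) → K}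
    {z : Fin (r + 1) → K} (hy : Function.Injective y) (hz : Function.Injective z)
    (hyz : ∀ i j, y i ≠ z j) (l : Fin p → Fin r) (c : K)
    (hl : ∀ m : Fin (r + 1), weightedSym (selectionProduct l (Fin.init y)) (m.removeNth z) =
      c * kostovSum (fun k => ∏ j, shiftRatio k (m.removeNth z j)) (univ.image (Fin.init y))) :
    weightedSym (selectionProduct (Fin.snoc (Fin.castSucc ∘ l) (Fin.last r)) y) z =
      c * kostovSum (fun k => ∏ j, shiftRatio k (z j)) (univ.image y) := by
  have hinit : Function.Injective (Fin.init y) := hy.comp (Fin.castSucc_injective p)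
  have hlast : y (Fin.last p) ∉ univ.image (Fin.init y) := by simp [Fin.init, hy.eq_iff]
  have hz_init : ∀ j ∈ univ, z j ∉ univ.image (Fin.init y) := by
    simpa [Fin.init] using fun j (i : Fin p) => hyz i.castSucc j
  rw [image_eq_insert_image_init, kostovSum_prod_shiftRatio_insert univ hz.injOn hlast
      (fun j _ => hyz _ j) hz_init, mul_sum, weightedSym_eq_sum_snoc]
  refine sum_congr rfl fun m _ => ?_
  simp only [selectionProduct_snoc_last, weightedSym_const_mul, prod_univ_erase]
  rw [hl, prod_image hinit.injOn]
  simp only [Fin.removeNth]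
  ring

theorem weightedSym_selectionProduct_natAdd [DecidableEq K] {y : Fin p → K} {z : Fin (q + p) → K}
    (hy : Function.Injective y) (hz : Function.Injective z) (hyz : ∀ i j, y i ≠ z j) :
    weightedSym (selectionProduct (Fin.natAdd q) y) z =
      q.factorial * kostovSum (fun k => ∏ j, shiftRatio k (z j)) (univ.image y) := by
  induction p with
  | zero =>
    have hone : selectionProduct (Fin.natAdd q) y = fun _ => 1 := funext fun _ => prod_empty
    simpa [hone] using weightedSym_one hz
  | succ p ih =>
    rw [natAdd_eq_snoc]
    exact weightedSym_selectionProduct_snoc_last hy hz hyz _ _ fun m =>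
      ih (hy.comp (Fin.castSucc_injective p)) (hz.comp m.succAbove_right_injective)
        fun _ _ => hyz _ _

theorem factorial_mul_sum_weightedSym_selectionProduct {y : Fin p → K} {z : Fin (q + p) → K}
    (hy : Function.Injective y) (hz : Function.Injective z) (hyz : ∀ i j, y i ≠ z j) :
    q.factorial * ∑ l : Fin p → Fin (q + p) with StrictMono l,
        weightedSym (fun u => selectionProduct l u z) y =
      weightedSym (selectionProduct (Fin.natAdd q) y) z := by
  rw [sum_weightedSym_selectionProduct hy hyz, weightedSym_selectionProduct_natAdd hy hz hyz]

end WeightedSymmetrization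

section Levels

theorem prod_Ioo_val_eq_prod_Ioi {M : Type*} [CommMonoid M] {n : ℕ} (i : Fin n) (f : ℕ → M) :
    ∏ j ∈ Ioo (i : ℕ) n, f j = ∏ j ∈ Ioi i, f j := by
  rw [← Fin.map_valEmbedding_Ioi, prod_map]
  rfl

theorem Wg_eq_pairWeight {k : ℕ} {t : ℕ → ℂ} {u : Fin k → ℂ} (htu : ∀ i : Fin k, t i = u i)
    (hu : Function.Injective u) : Wg k t = pairWeight u := by
  simp only [Wg, pairWeight, prod_range, prod_Ioo_val_eq_prod_Ioi, htu]
  exact prod_congr rfl fun i _ => prod_congr rfl fun j hj =>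
    sub_one_div_eq_shiftRatio (hu.ne (mem_Ioi.mp hj).ne)

theorem permOne_apply {r : ℕ} (z : ℕ → ℂ) (σ : Equiv.Perm (Fin r)) (i : Fin r) :
    permOne r z σ i = z (σ i) :=
  dif_pos i.isLt

theorem G_eq_weightedSym {p q : ℕ} {y z : ℕ → ℂ}
    (hz : Function.Injective fun j : Fin (q + p) => z j)
    (hyz : ∀ (i : Fin p) (j : Fin (q + p)), y i ≠ z j) :
    G p (q + p) y z = (q.factorial : ℂ)⁻¹ *
      weightedSym (selectionProduct (Fin.natAdd q) fun i : Fin p => y i) fun j => z j := by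
  rw [G, Nat.add_sub_cancel, one_div, weightedSym]
  refine congrArg _ (sum_congr rfl fun σ _ => ?_)
  have hperm : ∀ i : Fin p, permOne (q + p) z σ (i + q) = z (σ (Fin.natAdd q i)) := fun i => by
    rw [add_comm (i : ℕ) q, ← permOne_apply z, Fin.val_natAdd]
  rw [Wg_eq_pairWeight (permOne_apply z σ) (hz.comp σ.injective), prod_range,
    selectionProduct_natAdd]
  refine congrArg₂ _ (prod_congr rfl fun i _ => ?_) rfl
  rw [prod_Ioo_val_eq_prod_Ioi i fun j =>
    (y i - permOne (q + p) z σ (j + q) + 1) / (y i - permOne (q + p) z σ (j + q))]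
  simp only [hperm, add_one_div_eq_shiftRatio (hyz _ _)]
  rfl

theorem sum_weightedSym_eq_G {p r : ℕ} (hpr : p ≤ r) {y z : ℕ → ℂ}
    (hy : Function.Injective fun i : Fin p => y i) (hz : Function.Injective fun j : Fin r => z j)
    (hyz : ∀ (i : Fin p) (j : Fin r), y i ≠ z j) (x : Equiv.Perm (Fin r)) :
    ∑ l : Fin p → Fin r with StrictMono l,
      weightedSym (fun u => selectionProduct l u fun j => z (x j)) (fun i : Fin p => y i) =
    G p r y z := by
  obtain ⟨q, rfl⟩ := Nat.exists_eq_add_of_le' hpr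
  rw [G_eq_weightedSym hz hyz, ← weightedSym_comp_perm _ _ x,
    eq_inv_mul_iff_mul_eq₀ (mod_cast q.factorial_ne_zero)]
  exact factorial_mul_sum_weightedSym_selectionProduct hy (hz.comp x.injective) fun i j => hyz i _

variable {M : ℕ} {η : ℕ → ℕ} {s : ℕ → ℕ → ℂ}

theorem sPerm_apply (σ : (a : Fin (M + 1)) → Equiv.Perm (Fin (η a))) (a : Fin (M + 1))
    (i : Fin (η a)) : sPerm (M + 2) η s σ a i = s a (σ a i) :=
  dif_pos (c := (a : ℕ) < M + 2 - 1 ∧ (i : ℕ) < η a) ⟨a.isLt, i.isLt⟩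

theorem Ffun_sPerm (hcross : ∀ a < M, ∀ (i : Fin (η (a + 1))) (j : Fin (η a)), s (a + 1) i ≠ s a j)
    (l : (a : Fin M) → Fin (η (a + 1)) → Fin (η a))
    (σ : (a : Fin (M + 1)) → Equiv.Perm (Fin (η a))) :
    Ffun (M + 2) η l (sPerm (M + 2) η s σ) = ∏ a : Fin M, selectionProduct (l a)
      (fun i => s (a + 1) (σ a.succ i)) (fun j => s a (σ a.castSucc j)) := by
  refine prod_congr rfl fun a _ => prod_congr rfl fun i _ => ?_
  have hupper : sPerm (M + 2) η s σ (a + 1) i = s (a + 1) (σ a.succ i) := sPerm_apply σ a.succ i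
  have hlower : ∀ j : Fin (η a), sPerm (M + 2) η s σ a j = s a (σ a.castSucc j) :=
    sPerm_apply σ a.castSucc
  rw [prod_Ioo_val_eq_prod_Ioi (l a i) fun j => (sPerm (M + 2) η s σ (a + 1) i -
    sPerm (M + 2) η s σ a j + 1) / (sPerm (M + 2) η s σ (a + 1) i - sPerm (M + 2) η s σ a j)]
  simp only [hupper, hlower, add_one_div_eq_shiftRatio (hcross a a.isLt _ _)]

theorem prod_Wg_sPerm
    (hinj : ∀ a < M, Function.Injective fun i : Fin (η (a + 1)) => s (a + 1) i)
    (σ : (a : Fin (M + 1)) → Equiv.Perm (Fin (η a))) :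
    ∏ a ∈ Ico 1 (M + 1), Wg (η a) (sPerm (M + 2) η s σ a) =
      ∏ a : Fin M, pairWeight fun i => s (a + 1) (σ a.succ i) := by
  rw [prod_Ico_eq_prod_range, Nat.add_sub_cancel, prod_range]
  refine prod_congr rfl fun a _ => ?_
  rw [add_comm 1]
  exact Wg_eq_pairWeight (sPerm_apply σ a.succ) ((hinj a a.isLt).comp (σ a.succ).injective)

end Levels

/-- `∑_l S̄ym^{η̈}_{s̈}(F_l(s)) = ∏_{a=1}^{N−2} G_{η^{a+1}, η^a}(s^{a+1}; s^a)`,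
the sum over all collections `l` with `1 ≤ l^a_1 < … < l^a_{η^{a+1}} ≤ η^a`; the
symmetrization `S̄ym^{η̈}` is over the groups `a = 2, …, N−1` only (encoded by requiring
the first permutation to be the identity), with weight `∏_{a≥2} W_{η^a}`. -/
theorem sumF_eq_prod_G (N : ℕ) (hN : 2 ≤ N) (η : ℕ → ℕ)
    (hmono : ∀ a, a + 1 < N - 1 → η (a + 1) ≤ η a)
    (hpos : 1 ≤ η (N - 2))
    (s : ℕ → ℕ → ℂ)
    (hinj : ∀ a < N - 1, ∀ i < η a, ∀ j < η a, i ≠ j → s a i ≠ s a j)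
    (hcross : ∀ a, 1 ≤ a → a < N - 1 → ∀ i < η a, ∀ j < η (a - 1), s a i ≠ s (a - 1) j) :
    ∑ l ∈ Finset.univ.filter
        (fun l : (a : Fin (N - 1 - 1)) → Fin (η ((a : ℕ) + 1)) → Fin (η (a : ℕ)) =>
          ∀ a, StrictMono (l a)),
      ∑ σ ∈ Finset.univ.filter
          (fun σ : (a : Fin (N - 1)) → Equiv.Perm (Fin (η a)) =>
            σ ⟨0, by omega⟩ = 1),
        Ffun N η l (sPerm N η s σ) *
          ∏ a ∈ Finset.Ico 1 (N - 1), Wg (η a) (fun i => sPerm N η s σ a i) =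
    ∏ a ∈ Finset.range (N - 2), G (η (a + 1)) (η a) (s (a + 1)) (s a) := by
  obtain ⟨M, rfl⟩ : ∃ M, N = M + 2 := ⟨N - 2, by lia⟩
  have level_injective : ∀ a < M + 1, Function.Injective fun i : Fin (η a) => s a i :=
    fun a ha i j h => Fin.ext (not_imp_not.mp (hinj a ha i i.isLt j j.isLt) h)
  have levels_ne : ∀ a < M, ∀ (i : Fin (η (a + 1))) (j : Fin (η a)), s (a + 1) i ≠ s a j :=
    fun a ha i j => hcross (a + 1) (by lia) (by lia) i i.isLt j j.isLt
  let levelSum (a : Fin M) (x : Equiv.Perm (Fin (η a.castSucc)))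
      (t : Equiv.Perm (Fin (η a.succ))) : ℂ :=
    ∑ l : Fin (η (a + 1)) → Fin (η a) with StrictMono l,
      selectionProduct l (fun i => s (a + 1) (t i)) (fun j => s a (x j)) *
        pairWeight fun i => s (a + 1) (t i)
  have levelSum_sum : ∀ a x, ∑ t, levelSum a x t = G (η (a + 1)) (η a) (s (a + 1)) (s a) :=
    fun a x => sum_comm.trans <| sum_weightedSym_eq_G (hmono a (by lia))
      (level_injective _ (by lia)) (level_injective _ (by lia)) (levels_ne a a.isLt) x
  calc _ = ∑ σ : (a : Fin (M + 1)) → Equiv.Perm (Fin (η a)) with σ 0 = 1,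
        ∏ a, levelSum a (σ a.castSucc) (σ a.succ) := by
        rw [sum_comm]
        refine sum_congr rfl fun σ _ => ?_
        rw [prod_univ_sum]
        refine sum_congr (by ext; simp) fun l _ => ?_
        rw [Ffun_sPerm levels_ne, prod_mul_distrib]
        exact congrArg _ (prod_Wg_sPerm (fun a _ => level_injective (a + 1) (by lia)) σ)
    _ = ∏ a : Fin M, G (η (a + 1)) (η a) (s (a + 1)) (s a) := sum_prod_castSucc_succ levelSum_sum 1
    _ = _ := (prod_range fun a => G (η (a + 1)) (η a) (s (a + 1)) (s a)).symm
end
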